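/- Let m ≥ 2, let A be a commutative ring, and let c_{i,j} ∈ A be arbitrary elements for 1 ≤ i ≤ m−1 and 1 ≤ j ≤ m. Then Σ_{k=1}^{m−1} (−c_{k,m}) · Σ_{a ∈ Δ_{m−1,k}} sgn(a) · ∏_{1 ≤ i ≤ m−1, i ≠ k} c_{i,a_i} = Σ_{a ∈ Δ_{m,m}} sgn(a) · ∏_{i=1}^{m−1} c_{i,a_i}. -/

import Mathlib

/-!
Call an index `i` with `a_i > i` an *excess* of `a`, and let `m = n + 2`. For `a ∈ Δ_{m,m}` the
condition at `i = 1` (no positive integer is smaller than `1`) forces some excess to exist. Let `k`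
be the largest one. The sum in the condition at `k` is empty, so `a_k = m`, and `a_i < i` for
`k < i < m`. Replacing `a_k` by `k` and dropping `a_m = m` gives a tuple `b` of length `m - 1`.
For `i < k` the excess sum of `a` beyond `i` is that of `b` plus `m - k`, so the condition
`a_i = m - ∑ …` for `a` is the condition `b_i = k - ∑ …` for `b`; hence `b ∈ Δ_{m-1,k}`. This is a
bijection of `Δ_{m,m}` with the disjoint union of the `Δ_{m-1,k}`. It removes one excess, whence the
sign, and one factor `c_{k,m}` from the product, so the identity holds term by term.

The inverse map is `liftDelta`; `memDelta_liftDelta_iff` compares the two membership conditions.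
-/

/-!
Identity (eq:Delta2) from the proof of Proposition 5.18: for `m ≥ 2`,
`Σ_{k=1}^{m−1} (−c_{k,m}) · Σ_{a ∈ Δ_{m−1,k}} sgn(a) · ∏_{i≤m−1, i≠k} c_{i,a_i}
   = Σ_{a ∈ Δ_{m,m}} sgn(a) · ∏_{i=1}^{m−1} c_{i,a_i}`.

Tuples `a ∈ Δ_{d,k}` are encoded as functions `a : Fin d → ℕ`; the Lean index
`i : Fin d` corresponds to paper index `(i:ℕ)+1`.  Here `m = n + 2`.
-/

/-- Membership predicate for `Δ_{d,k}`. -/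
def memDelta (d k : ℕ) (a : Fin d → ℕ) : Prop :=
  (∀ i : Fin d, (i : ℕ) + 1 = k → a i = k) ∧
  (∀ i : Fin d, k < (i : ℕ) + 1 → a i < (i : ℕ) + 1) ∧
  (∀ i : Fin d, (i : ℕ) + 1 < k →
    (a i < (i : ℕ) + 1 ∨
      (a i : ℤ) = (k : ℤ) -
        ∑ j ∈ Finset.univ.filter
            (fun j : Fin d => (i : ℕ) < (j : ℕ) ∧ (j : ℕ) + 1 < a j),
          ((a j : ℤ) - ((j : ℕ) + 1))))

/-- The set `Δ_{d,k}` of tuples of positive integers, as a finite set of functions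
`Fin d → ℕ` (all entries automatically lie in `{1,…,d}`). -/
noncomputable def DeltaSet (d k : ℕ) : Finset (Fin d → ℕ) :=
  @Finset.filter _ (memDelta d k) (Classical.decPred _)
    (Fintype.piFinset fun _ : Fin d => Finset.Icc 1 d)

/-- `sgn(a) = (−1)^{#{i : a_i > i}}`. -/
def sgnDelta {d : ℕ} (a : Fin d → ℕ) : ℤ :=
  (-1) ^ (Finset.univ.filter fun i : Fin d => (i : ℕ) + 1 < a i).card

/-- The sum `∑_{j > i, a_j > j} (a_j - j)`, with `i` a zero-based position. -/
def excessSum {d : ℕ} (a : Fin d → ℕ) (i : ℕ) : ℤ :=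
  ∑ j ∈ Finset.univ.filter (fun j : Fin d => i < (j : ℕ) ∧ (j : ℕ) + 1 < a j),
    ((a j : ℤ) - ((j : ℕ) + 1))

/-- The tuple of length `n + 2` obtained from `b` by replacing the entry at `k` by `n + 2` and
appending a last entry `n + 2`. -/
def liftDelta {n : ℕ} (k : Fin (n + 1)) (b : Fin (n + 1) → ℕ) : Fin (n + 2) → ℕ :=
  Fin.snoc (α := fun _ => ℕ) (Function.update b k (n + 2)) (n + 2)

lemma liftDelta_castSucc {n : ℕ} (k : Fin (n + 1)) (b : Fin (n + 1) → ℕ) (i : Fin (n + 1)) :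
    liftDelta k b i.castSucc = if i = k then n + 2 else b i := by
  simp [liftDelta, Function.update_apply]

lemma liftDelta_last {n : ℕ} (k : Fin (n + 1)) (b : Fin (n + 1) → ℕ) :
    liftDelta k b (Fin.last (n + 1)) = n + 2 := by
  simp [liftDelta]

lemma excessSum_liftDelta {n : ℕ} (k : Fin (n + 1)) (b : Fin (n + 1) → ℕ)
    (hk : b k = k + 1) (i : ℕ) :
    excessSum (liftDelta k b) i
      = excessSum b i + if i < (k : ℕ) then ((n : ℤ) + 1 - k) else 0 := by
  unfold excessSum
  rw [Finset.sum_filter, Finset.sum_filter, Fin.sum_univ_castSucc,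
    ← Finset.add_sum_erase _ _ (Finset.mem_univ k),
    ← Finset.add_sum_erase (a := k) Finset.univ (fun j : Fin (n + 1) =>
      if i < (j : ℕ) ∧ (j : ℕ) + 1 < b j then ((b j : ℤ) - ((j : ℕ) + 1)) else 0)
      (Finset.mem_univ k)]
  have h : ∀ j ∈ Finset.univ.erase k, liftDelta k b j.castSucc = b j := by
    intro j hj
    rw [liftDelta_castSucc, if_neg (Finset.ne_of_mem_erase hj)]
  rw [Finset.sum_congr rfl (fun j hj => by rw [h j hj])]
  simp only [liftDelta_castSucc, liftDelta_last, hk, Fin.val_castSucc, Fin.val_last]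
  have hkn : (k : ℕ) ≤ n := Nat.lt_succ_iff.1 k.isLt
  by_cases hi : i < (k : ℕ)
  · simp [hi, hkn]; ring
  · simp [hi]

lemma excessSum_nonneg {d : ℕ} (a : Fin d → ℕ) (i : ℕ) : 0 ≤ excessSum a i := by
  refine Finset.sum_nonneg fun j hj => ?_
  simp only [Finset.mem_filter] at hj
  omega

lemma excessSum_eq_zero {d : ℕ} (a : Fin d → ℕ) (i : ℕ)
    (h : ∀ j : Fin d, i < (j : ℕ) → a j ≤ (j : ℕ) + 1) : excessSum a i = 0 := by
  refine Finset.sum_eq_zero fun j hj => ?_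
  simp only [Finset.mem_filter] at hj
  have := h j hj.2.1
  omega

lemma memDelta_iff (d k : ℕ) (a : Fin d → ℕ) :
    memDelta d k a ↔ (∀ i : Fin d, (i : ℕ) + 1 = k → a i = k) ∧
      (∀ i : Fin d, k < (i : ℕ) + 1 → a i < (i : ℕ) + 1) ∧
      (∀ i : Fin d, (i : ℕ) + 1 < k →
        (a i < (i : ℕ) + 1 ∨ (a i : ℤ) = (k : ℤ) - excessSum a i)) :=
  Iff.rfl

lemma memDelta_liftDelta_iff {n : ℕ} (k : Fin (n + 1)) (b : Fin (n + 1) → ℕ)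
    (hk : b k = k + 1) (hb : ∀ i, k < i → b i ≤ (i : ℕ) + 1) :
    memDelta (n + 2) (n + 2) (liftDelta k b) ↔ memDelta (n + 1) (k + 1) b := by
  have hz : ∀ i : ℕ, (k : ℕ) ≤ i → excessSum b i = 0 := fun i hi =>
    excessSum_eq_zero b i fun j hj => hb j (Fin.lt_def.2 (by omega))
  rw [memDelta_iff, memDelta_iff]
  simp only [Fin.forall_fin_succ' (n := n + 1), liftDelta_castSucc, liftDelta_last, Fin.val_castSucc,
    Fin.val_last, excessSum_liftDelta k b hk]
  constructor
  · rintro ⟨-, -, h, -⟩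
    refine ⟨fun i hi => ?_, fun i hi => ?_, fun i hi => ?_⟩
    · obtain rfl : i = k := Fin.ext (by omega)
      exact hk
    · have hik : i ≠ k := by rintro rfl; omega
      have h1 := h i (by omega)
      rw [if_neg hik, if_neg (by omega), hz i (by omega)] at h1
      have := hb i (Fin.lt_def.2 (by omega))
      omega
    · have hik : i ≠ k := by rintro rfl; omega
      have h1 := h i (by omega)
      rw [if_neg hik, if_pos (by omega)] at h1
      push_cast at h1 ⊢
      omega
  · rintro ⟨-, h2, h3⟩
    refine ⟨⟨fun i hi => ?_, fun _ => trivial⟩, ⟨fun i hi => ?_, fun hi => ?_⟩, fun i hi => ?_,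
      fun hi => ?_⟩
    · omega
    · omega
    · omega
    · rcases lt_trichotomy (i : ℕ) k with hlt | heq | hgt
      · have hik : i ≠ k := by rintro rfl; omega
        have h1 := h3 i (by omega)
        rw [if_neg hik, if_pos hlt]
        push_cast at h1 ⊢
        omega
      · obtain rfl : i = k := Fin.ext heq
        simp [hz i le_rfl]
      · have hik : i ≠ k := by rintro rfl; omega
        rw [if_neg hik]
        exact Or.inl (h2 i (by omega))
    · omega

lemma mem_DeltaSet {d k : ℕ} {a : Fin d → ℕ} :
    a ∈ DeltaSet d k ↔ (∀ i, 1 ≤ a i ∧ a i ≤ d) ∧ memDelta d k a := by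
  simp [DeltaSet, Fintype.mem_piFinset]

lemma apply_of_mem_DeltaSet {n : ℕ} {k : Fin (n + 1)} {b : Fin (n + 1) → ℕ}
    (hb : b ∈ DeltaSet (n + 1) (k + 1)) : b k = k + 1 :=
  (mem_DeltaSet.1 hb).2.1 k rfl

lemma apply_lt_of_mem_DeltaSet {n : ℕ} {k : Fin (n + 1)} {b : Fin (n + 1) → ℕ}
    (hb : b ∈ DeltaSet (n + 1) (k + 1)) (i : Fin (n + 1)) (hi : k < i) : b i < i + 1 :=
  (mem_DeltaSet.1 hb).2.2.1 i (by have := Fin.lt_def.1 hi; omega)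

lemma liftDelta_mem {n : ℕ} {k : Fin (n + 1)} {b : Fin (n + 1) → ℕ}
    (hb : b ∈ DeltaSet (n + 1) (k + 1)) : liftDelta k b ∈ DeltaSet (n + 2) (n + 2) := by
  rw [mem_DeltaSet, memDelta_liftDelta_iff k b (apply_of_mem_DeltaSet hb)
    fun i hi => (apply_lt_of_mem_DeltaSet hb i hi).le]
  refine ⟨?_, (mem_DeltaSet.1 hb).2⟩
  rw [Fin.forall_fin_succ']
  refine ⟨fun i => ?_, by simp [liftDelta_last]⟩
  have := (mem_DeltaSet.1 hb).1 i
  rw [liftDelta_castSucc]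
  split_ifs <;> omega

/-- The position `k` is recovered from `liftDelta k b` as its largest excess before the last
entry. -/
lemma not_lt_of_liftDelta_eq {n : ℕ} {k k' : Fin (n + 1)} {b b' : Fin (n + 1) → ℕ}
    (hb : b ∈ DeltaSet (n + 1) (k + 1)) (h : liftDelta k b = liftDelta k' b') : ¬ k < k' := by
  intro hlt
  have h1 := congrFun h k'.castSucc
  rw [liftDelta_castSucc, liftDelta_castSucc, if_neg hlt.ne', if_pos rfl] at h1
  have := apply_lt_of_mem_DeltaSet hb k' hlt
  omega

lemma liftDelta_injective {n : ℕ} {k k' : Fin (n + 1)} {b b' : Fin (n + 1) → ℕ}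
    (hb : b ∈ DeltaSet (n + 1) (k + 1)) (hb' : b' ∈ DeltaSet (n + 1) (k' + 1))
    (h : liftDelta k b = liftDelta k' b') : k = k' ∧ b = b' := by
  obtain rfl : k = k' :=
    le_antisymm (not_lt.1 (not_lt_of_liftDelta_eq hb' h.symm))
      (not_lt.1 (not_lt_of_liftDelta_eq hb h))
  refine ⟨rfl, funext fun i => ?_⟩
  by_cases hi : i = k
  · subst hi
    rw [apply_of_mem_DeltaSet hb, apply_of_mem_DeltaSet hb']
  · have h1 := congrFun h i.castSucc
    rwa [liftDelta_castSucc, liftDelta_castSucc, if_neg hi, if_neg hi] at h1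

lemma exists_liftDelta_eq {n : ℕ} {a : Fin (n + 2) → ℕ} (ha : a ∈ DeltaSet (n + 2) (n + 2)) :
    ∃ k : Fin (n + 1), ∃ b ∈ DeltaSet (n + 1) (k + 1), liftDelta k b = a := by
  obtain ⟨hbd, hmem⟩ := mem_DeltaSet.1 ha
  have hmem' := hmem
  rw [memDelta_iff] at hmem'
  obtain ⟨hlast, -, hlow⟩ := hmem'
  have ha_last : a (Fin.last (n + 1)) = n + 2 := hlast _ (by simp)
  -- The last entry `n + 2` sits at its own index, so it is never an excess.
  have hzero : ∀ i : ℕ, (∀ j : Fin (n + 1), i < (j : ℕ) → a j.castSucc ≤ (j : ℕ) + 1) →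
      excessSum a i = 0 := by
    intro i h
    apply excessSum_eq_zero
    rw [Fin.forall_fin_succ']
    exact ⟨fun j hj => h j hj, fun _ => by rw [ha_last]; simp⟩
  let S : Finset (Fin (n + 1)) := Finset.univ.filter fun i => (i : ℕ) + 1 < a i.castSucc
  have hS : S.Nonempty := by
    by_contra hne
    rw [Finset.not_nonempty_iff_eq_empty, Finset.filter_eq_empty_iff] at hne
    have hne' : ∀ j : Fin (n + 1), a j.castSucc ≤ (j : ℕ) + 1 :=
      fun j => not_lt.1 (hne (Finset.mem_univ j))
    have h0 := hlow (Fin.castSucc 0) (by simp)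
    rw [hzero _ fun j _ => hne' j] at h0
    have h1 := hne' 0
    have h2 := hbd (Fin.castSucc 0)
    simp only [Fin.val_castSucc, Fin.val_zero] at h0 h1
    omega
  obtain ⟨k, hkS, hmax⟩ : ∃ k ∈ S, ∀ j ∈ S, j ≤ k :=
    ⟨S.max' hS, S.max'_mem hS, fun j hj => S.le_max' j hj⟩
  have hk : (k : ℕ) + 1 < a k.castSucc := (Finset.mem_filter.1 hkS).2
  have habove : ∀ j : Fin (n + 1), k < j → a j.castSucc ≤ (j : ℕ) + 1 := by
    intro j hj
    by_contra hlt
    exact absurd (hmax j (Finset.mem_filter.2 ⟨Finset.mem_univ j, not_le.1 hlt⟩)) (not_le.2 hj)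
  have hak : a k.castSucc = n + 2 := by
    have h1 := hlow k.castSucc (by have := k.isLt; simp only [Fin.val_castSucc]; omega)
    rw [Fin.val_castSucc, hzero k fun j hj => habove j (Fin.lt_def.2 hj)] at h1
    push_cast at h1
    omega
  let b : Fin (n + 1) → ℕ := Function.update (fun i => a i.castSucc) k (k + 1)
  have hbk : b k = k + 1 := by simp [b]
  have hbne : ∀ i, i ≠ k → b i = a i.castSucc := fun i hi => by simp [b, hi]
  have hlift : liftDelta k b = a := by
    funext i
    induction i using Fin.lastCases with
    | last => rw [liftDelta_last, ha_last]
    | cast i =>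
      rw [liftDelta_castSucc]
      split_ifs with hi
      · rw [hi, hak]
      · exact hbne i hi
  have hmemb : memDelta (n + 1) (k + 1) b := by
    rw [← memDelta_liftDelta_iff k b hbk fun i hi => by rw [hbne i hi.ne']; exact habove i hi,
      hlift]
    exact hmem
  refine ⟨k, b, mem_DeltaSet.2 ⟨fun i => ⟨?_, ?_⟩, hmemb⟩, hlift⟩
  · by_cases hi : i = k
    · subst hi; omega
    · rw [hbne i hi]; exact (hbd _).1
  · rw [memDelta_iff] at hmemb
    obtain ⟨h1, h2, h3⟩ := hmemb
    have hE := excessSum_nonneg b i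
    rcases lt_trichotomy ((i : ℕ) + 1) (k + 1) with h | h | h
    · have := h3 i h
      push_cast at this
      omega
    · have := h1 i h
      omega
    · have := h2 i h
      omega

lemma sgnDelta_eq_prod {d : ℕ} (a : Fin d → ℕ) :
    sgnDelta a = ∏ i : Fin d, if (i : ℕ) + 1 < a i then -1 else 1 := by
  rw [sgnDelta, Finset.prod_ite]
  simp

lemma sgnDelta_liftDelta {n : ℕ} (k : Fin (n + 1)) (b : Fin (n + 1) → ℕ) (hk : b k = k + 1) :
    sgnDelta (liftDelta k b) = - sgnDelta b := by
  rw [sgnDelta_eq_prod, sgnDelta_eq_prod, Fin.prod_univ_castSucc,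
    ← Finset.mul_prod_erase _ _ (Finset.mem_univ k),
    ← Finset.mul_prod_erase (a := k) Finset.univ
      (fun j : Fin (n + 1) => if (j : ℕ) + 1 < b j then (-1 : ℤ) else 1) (Finset.mem_univ k)]
  have h : ∀ j ∈ Finset.univ.erase k, liftDelta k b j.castSucc = b j := by
    intro j hj
    rw [liftDelta_castSucc, if_neg (Finset.ne_of_mem_erase hj)]
  rw [Finset.prod_congr rfl (fun j hj => by rw [h j hj])]
  have hkn : (k : ℕ) ≤ n := Nat.lt_succ_iff.1 k.isLt
  simp [liftDelta_castSucc, liftDelta_last, hk, hkn]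

lemma prod_liftDelta {A : Type*} [CommRing A] {n : ℕ} (c : ℕ → ℕ → A) (k : Fin (n + 1))
    (b : Fin (n + 1) → ℕ) :
    ∏ i ∈ Finset.univ.filter (fun i : Fin (n + 2) => (i : ℕ) + 1 ≤ n + 1),
        c ((i : ℕ) + 1) (liftDelta k b i)
      = c (k + 1) (n + 2) *
        ∏ i ∈ Finset.univ.filter (fun i : Fin (n + 1) => (i : ℕ) + 1 ≠ k + 1),
          c ((i : ℕ) + 1) (b i) := by
  rw [Finset.prod_filter, Finset.prod_filter, Fin.prod_univ_castSucc,
    ← Finset.mul_prod_erase _ _ (Finset.mem_univ k),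
    ← Finset.mul_prod_erase (a := k) Finset.univ
      (fun j : Fin (n + 1) => if (j : ℕ) + 1 ≠ k + 1 then c ((j : ℕ) + 1) (b j) else 1)
      (Finset.mem_univ k)]
  have h : ∀ j ∈ Finset.univ.erase k,
      (if (j.castSucc : ℕ) + 1 ≤ n + 1 then
        c ((j.castSucc : ℕ) + 1) (liftDelta k b j.castSucc) else 1)
      = if (j : ℕ) + 1 ≠ k + 1 then c ((j : ℕ) + 1) (b j) else 1 := by
    intro j hj
    have hjk := Finset.ne_of_mem_erase hj
    have hjk' : (j : ℕ) + 1 ≠ k + 1 := fun e => hjk (Fin.ext (by omega))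
    have := j.isLt
    rw [liftDelta_castSucc, if_neg hjk, if_pos hjk', Fin.val_castSucc, if_pos (by omega)]
  rw [Finset.prod_congr rfl h]
  have hk : (k : ℕ) ≤ n := Nat.lt_succ_iff.1 k.isLt
  simp [liftDelta_castSucc, hk]

theorem delta_identity_two {A : Type*} [CommRing A] (n : ℕ) (c : ℕ → ℕ → A) :
    ∑ k ∈ Finset.Icc 1 (n + 1),
        (-(c k (n + 2))) *
          ∑ a ∈ DeltaSet (n + 1) k,
            ((sgnDelta a : ℤ) : A) *
              ∏ i ∈ Finset.univ.filter (fun i : Fin (n + 1) => (i : ℕ) + 1 ≠ k),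
                c ((i : ℕ) + 1) (a i)
      = ∑ a ∈ DeltaSet (n + 2) (n + 2),
          ((sgnDelta a : ℤ) : A) *
            ∏ i ∈ Finset.univ.filter (fun i : Fin (n + 2) => (i : ℕ) + 1 ≤ n + 1),
              c ((i : ℕ) + 1) (a i) := by
  have hIcc : ∀ f : ℕ → A, ∑ k ∈ Finset.Icc 1 (n + 1), f k = ∑ k : Fin (n + 1), f (k + 1) := by
    intro f
    rw [Fin.sum_univ_eq_sum_range (fun k => f (k + 1)), Finset.range_eq_Ico,
      Finset.sum_Ico_add' f 0 (n + 1) 1]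
    rfl
  rw [hIcc]
  simp only [Finset.mul_sum]
  rw [Finset.sum_sigma']
  refine Finset.sum_bij (fun p _ => liftDelta p.1 p.2) ?_ ?_ ?_ ?_
  · rintro ⟨k, b⟩ hp
    exact liftDelta_mem (Finset.mem_sigma.1 hp).2
  · rintro ⟨k, b⟩ hp ⟨k', b'⟩ hp' h
    obtain ⟨rfl, rfl⟩ :=
      liftDelta_injective (Finset.mem_sigma.1 hp).2 (Finset.mem_sigma.1 hp').2 h
    rfl
  · intro a ha
    obtain ⟨k, b, hb, h⟩ := exists_liftDelta_eq ha
    exact ⟨⟨k, b⟩, Finset.mem_sigma.2 ⟨Finset.mem_univ k, hb⟩, h⟩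
  · rintro ⟨k, b⟩ hp
    have hk := apply_of_mem_DeltaSet (Finset.mem_sigma.1 hp).2
    simp only [sgnDelta_liftDelta k b hk, prod_liftDelta c k b]
    push_cast
    ring
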